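/- arXiv:1611.07285 — 5 statements merged into one kernel-verified Lean document; each statement's English description precedes it below -/
import Mathlib

section
/- Fix a real inner product space E, a weight vector w ∈ E, a learning rate η > 0 and a regularization parameter λ ≥ 0 with a := 1 − ηλ > 0. Let (pᵢ, qᵢ) be a family of labeled examples indexed by a finite nonempty set, with ‖pᵢ‖ = 1 and qᵢ ∈ {−1, 1}, and let w⁽ⁱ⁾ := a·w + η·qᵢ·pᵢ be the SGD update of w on (pᵢ, qᵢ). Then for all indices i, j the following are equivalent: (1) ⟪w⁽ⁱ⁾, w⟫ ≤ ⟪w⁽ʲ⁾, w⟫; (2) qᵢ·⟪w, pᵢ⟫ ≤ qⱼ·⟪w, pⱼ⟫; (3) qᵢ·⟪w⁽ⁱ⁾, pᵢ⟫ ≤ qⱼ·⟪w⁽ʲ⁾, pⱼ⟫. In particular, an index i minimizes ⟪w⁽ⁱ⁾, w⟫ over the index set if and only if it minimizes qᵢ·⟪w, pᵢ⟫, if and only if it minimizes qᵢ·⟪w⁽ⁱ⁾, pᵢ⟫. -/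
open scoped InnerProductSpace

/-!
In terms of the signed example `x = q • p`, the margin of `w` is `⟪w, x⟫` and its update is
`w' = a • w + η • x`. Hence `⟪w', w⟫ = η * ⟪w, x⟫ + a * ‖w‖ ^ 2` and
`⟪w', x⟫ = a * ⟪w, x⟫ + η * ‖x‖ ^ 2`: over examples of equal norm, both are strictly increasing
affine functions of the current margin.
-/

section SGDUpdate

variable {E : Type*} [SeminormedAddCommGroup E] [InnerProductSpace ℝ E]

/-- The margin-violating SGD update of the weight vector `w` with shrinkage factor `a` (in the
regularized problem, `1 - η * lam`) and learning rate `η`. An example `p` with label `q` enters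
through the signed example `x = q • p`. -/
def sgdUpdate (a η : ℝ) (w x : E) : E := a • w + η • x

theorem inner_sgdUpdate_left (a η : ℝ) (w x y : E) :
    ⟪sgdUpdate a η w x, y⟫_ℝ = a * ⟪w, y⟫_ℝ + η * ⟪x, y⟫_ℝ := by
  rw [sgdUpdate, inner_add_left, real_inner_smul_left, real_inner_smul_left]

theorem inner_sgdUpdate_weight_le_iff (a : ℝ) {η : ℝ} (hη : 0 < η) (w x y : E) :
    ⟪sgdUpdate a η w x, w⟫_ℝ ≤ ⟪sgdUpdate a η w y, w⟫_ℝ ↔ ⟪w, x⟫_ℝ ≤ ⟪w, y⟫_ℝ := by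
  rw [inner_sgdUpdate_left, inner_sgdUpdate_left, add_le_add_iff_left, mul_le_mul_iff_right₀ hη,
    real_inner_comm, real_inner_comm w y]

theorem inner_sgdUpdate_example_le_iff {a : ℝ} (ha : 0 < a) (η : ℝ) (w : E) {x y : E}
    (hxy : ‖x‖ = ‖y‖) :
    ⟪sgdUpdate a η w x, x⟫_ℝ ≤ ⟪sgdUpdate a η w y, y⟫_ℝ ↔ ⟪w, x⟫_ℝ ≤ ⟪w, y⟫_ℝ := by
  rw [inner_sgdUpdate_left, inner_sgdUpdate_left, real_inner_self_eq_norm_sq,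
    real_inner_self_eq_norm_sq, hxy, add_le_add_iff_right, mul_le_mul_iff_right₀ ha]

theorem sgd_inner_margin_equiv_general {ι : Type*} (w : E) {η a : ℝ} (hη : 0 < η) (ha : 0 < a)
    (p : ι → E) (q : ι → ℝ) {r : ℝ} (hr : ∀ i, ‖q i • p i‖ = r)
    (w' : ι → E) (hw' : ∀ i, w' i = a • w + (η * q i) • p i) :
    (∀ i j : ι,
      (⟪w' i, w⟫_ℝ ≤ ⟪w' j, w⟫_ℝ ↔ q i * ⟪w, p i⟫_ℝ ≤ q j * ⟪w, p j⟫_ℝ) ∧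
      (q i * ⟪w, p i⟫_ℝ ≤ q j * ⟪w, p j⟫_ℝ ↔
        q i * ⟪w' i, p i⟫_ℝ ≤ q j * ⟪w' j, p j⟫_ℝ)) ∧
    (∀ i : ι,
      ((∀ j, ⟪w' i, w⟫_ℝ ≤ ⟪w' j, w⟫_ℝ) ↔
        (∀ j, q i * ⟪w, p i⟫_ℝ ≤ q j * ⟪w, p j⟫_ℝ)) ∧
      ((∀ j, q i * ⟪w, p i⟫_ℝ ≤ q j * ⟪w, p j⟫_ℝ) ↔
        (∀ j, q i * ⟪w' i, p i⟫_ℝ ≤ q j * ⟪w' j, p j⟫_ℝ))) := by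
  have update_eq (i : ι) : w' i = sgdUpdate a η w (q i • p i) := by
    rw [hw', sgdUpdate, mul_smul]
  simp only [update_eq, ← real_inner_smul_right]
  have current_iff (i j : ι) :=
    inner_sgdUpdate_weight_le_iff a hη w (q i • p i) (q j • p j)
  have future_iff (i j : ι) :=
    (inner_sgdUpdate_example_le_iff ha η w ((hr i).trans (hr j).symm)).symm
  exact ⟨fun i j ↦ ⟨current_iff i j, future_iff i j⟩,
    fun i ↦ ⟨forall_congr' (current_iff i), forall_congr' (future_iff i)⟩⟩

end SGDUpdate

/-- For SGD updates `w⁽ⁱ⁾ = a•w + η·qᵢ•pᵢ` on unit-norm labeled examples,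
the three orderings ⟪w⁽ⁱ⁾,w⟫, current margin qᵢ⟪w,pᵢ⟫, and future margin qᵢ⟪w⁽ⁱ⁾,pᵢ⟫
are pairwise equivalent, hence they have the same minimizers. -/
theorem sgd_inner_margin_equiv
    {E : Type*} [NormedAddCommGroup E] [InnerProductSpace ℝ E]
    {ι : Type*} [Fintype ι] [Nonempty ι]
    (w : E) (η lam : ℝ) (hη : 0 < η) (hlam : 0 ≤ lam)
    (a : ℝ) (ha : a = 1 - η * lam) (ha0 : 0 < a)
    (p : ι → E) (q : ι → ℝ)
    (hp : ∀ i, ‖p i‖ = 1) (hq : ∀ i, q i = 1 ∨ q i = -1)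
    (w' : ι → E) (hw' : ∀ i, w' i = a • w + (η * q i) • p i) :
    (∀ i j : ι,
      (⟪w' i, w⟫_ℝ ≤ ⟪w' j, w⟫_ℝ ↔ q i * ⟪w, p i⟫_ℝ ≤ q j * ⟪w, p j⟫_ℝ) ∧
      (q i * ⟪w, p i⟫_ℝ ≤ q j * ⟪w, p j⟫_ℝ ↔
        q i * ⟪w' i, p i⟫_ℝ ≤ q j * ⟪w' j, p j⟫_ℝ)) ∧
    (∀ i : ι,
      ((∀ j, ⟪w' i, w⟫_ℝ ≤ ⟪w' j, w⟫_ℝ) ↔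
        (∀ j, q i * ⟪w, p i⟫_ℝ ≤ q j * ⟪w, p j⟫_ℝ)) ∧
      ((∀ j, q i * ⟪w, p i⟫_ℝ ≤ q j * ⟪w, p j⟫_ℝ) ↔
        (∀ j, q i * ⟪w' i, p i⟫_ℝ ≤ q j * ⟪w' j, p j⟫_ℝ))) := by
  exact sgd_inner_margin_equiv_general w hη ha0 p q (r := 1)
    (fun i ↦ by rcases hq i with h | h <;> simp [h, hp i]) w' hw'
end

section
/- Let a, η, s be real numbers with a > 0, η > 0 and a²·s > η². Then the function f(m) := (a·m + η) / √(a²·s + 2·a·η·m + η²) is strictly monotone increasing on the closed interval [−√s, √s]; moreover the quantity under the square root is strictly positive for every m in this interval. -/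
/-!
In terms of `x = a * m + η` the radicand is affine: it equals `b * x + c` with `b = 2 * η` and
`c = a ^ 2 * s - η ^ 2 > 0`. So the margin map is `x / √(b * x + c)`. For `x < y`, writing
`p = √(b * x + c)` and `q = √(b * y + c)`, the identity
`(y * p - x * q) * (p + q) = (y - x) * (c + p * q)` gives `x / p < y / q`.
-/

theorem strictMonoOn_div_sqrt_affine (b : ℝ) {c : ℝ} (hc : 0 ≤ c) :
    StrictMonoOn (fun x : ℝ => x / √(b * x + c)) {x | 0 < b * x + c} := by
  intro x hx y hy hxy
  have hp : 0 < √(b * x + c) := Real.sqrt_pos.mpr hx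
  have hq : 0 < √(b * y + c) := Real.sqrt_pos.mpr hy
  have hp_sq : √(b * x + c) ^ 2 = b * x + c := Real.sq_sqrt (le_of_lt hx)
  have hq_sq : √(b * y + c) ^ 2 = b * y + c := Real.sq_sqrt (le_of_lt hy)
  beta_reduce
  set p := √(b * x + c)
  set q := √(b * y + c)
  have factorization : (y * p - x * q) * (p + q) = (y - x) * (c + p * q) := by
    linear_combination y * hp_sq - x * hq_sq
  have product_pos : 0 < (y * p - x * q) * (p + q) := by
    rw [factorization]
    exact mul_pos (sub_pos.mpr hxy) (by positivity)
  rw [div_lt_div_iff₀ hp hq]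
  exact sub_pos.mp (pos_of_mul_pos_left product_pos (by positivity))

theorem radicand_pos_of_sq_le {a η s m : ℝ} (hm : m ^ 2 ≤ s) (hs : η ^ 2 ≠ a ^ 2 * s) :
    0 < a ^ 2 * s + 2 * a * η * m + η ^ 2 := by
  have sum_eq : a ^ 2 * s + 2 * a * η * m + η ^ 2 = a ^ 2 * (s - m ^ 2) + (a * m + η) ^ 2 := by
    ring
  have defect_nonneg : 0 ≤ a ^ 2 * (s - m ^ 2) := mul_nonneg (sq_nonneg a) (sub_nonneg.mpr hm)
  rw [sum_eq]
  refine (add_nonneg defect_nonneg (sq_nonneg _)).lt_of_ne' fun h => hs ?_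
  obtain ⟨defect_eq, sq_eq⟩ := (add_eq_zero_iff_of_nonneg defect_nonneg (sq_nonneg _)).mp h
  have root_eq : a * m + η = 0 := sq_eq_zero_iff.mp sq_eq
  linear_combination (η - a * m) * root_eq - defect_eq

theorem future_margin_strictMonoOn_general
    (a η s : ℝ) (ha : 0 < a) (hs : η ^ 2 < a ^ 2 * s) :
    StrictMonoOn (fun m : ℝ => (a * m + η) / √(a ^ 2 * s + 2 * a * η * m + η ^ 2))
      {m | 0 < a ^ 2 * s + 2 * a * η * m + η ^ 2} ∧
    Set.Icc (-√s) √s ⊆ {m | 0 < a ^ 2 * s + 2 * a * η * m + η ^ 2} := by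
  constructor
  · have radicand_eq (m : ℝ) :
        a ^ 2 * s + 2 * a * η * m + η ^ 2 = 2 * η * (a * m + η) + (a ^ 2 * s - η ^ 2) := by
      ring
    have affine_strictMono : StrictMono fun m : ℝ => a * m + η :=
      (strictMono_mul_left_of_pos ha).add_const η
    simp only [radicand_eq]
    exact (strictMonoOn_div_sqrt_affine (2 * η) (sub_nonneg.mpr hs.le)).comp
      (affine_strictMono.strictMonoOn _) fun _ hm => hm
  · intro m hm
    have s_pos : 0 < s := pos_of_mul_pos_right ((sq_nonneg η).trans_lt hs) (sq_nonneg a)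
    exact radicand_pos_of_sq_le ((Real.sq_le s_pos.le).mpr hm) hs.ne

/-- For `a > 0`, `η > 0` and `a²s > η²`, the normalized-future-margin map
`f(m) = (a·m + η)/√(a²s + 2aηm + η²)` is strictly monotone increasing on `[-√s, √s]`,
and the radicand is strictly positive on this interval. -/
theorem future_margin_strictMonoOn
    (a η s : ℝ) (ha : 0 < a) (hη : 0 < η) (hs : η ^ 2 < a ^ 2 * s) :
    StrictMonoOn
      (fun m : ℝ => (a * m + η) / Real.sqrt (a ^ 2 * s + 2 * a * η * m + η ^ 2))
      (Set.Icc (-Real.sqrt s) (Real.sqrt s)) ∧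
    ∀ m ∈ Set.Icc (-Real.sqrt s) (Real.sqrt s),
      0 < a ^ 2 * s + 2 * a * η * m + η ^ 2 := by
  obtain ⟨strictMonoOn_pos, Icc_subset_pos⟩ := future_margin_strictMonoOn_general a η s ha hs
  exact ⟨strictMonoOn_pos.mono Icc_subset_pos, Icc_subset_pos⟩
end

section
/- Fix a real inner product space E, a weight vector w ∈ E with w ≠ 0, a learning rate η > 0 and a regularization parameter λ ≥ 0 with a := 1 − ηλ > 0, and assume a·‖w‖ > η. Let (pᵢ, qᵢ) and (pⱼ, qⱼ) be labeled examples with ‖pᵢ‖ = ‖pⱼ‖ = 1 and qᵢ, qⱼ ∈ {−1, 1}, and let w⁽ⁱ⁾ := a·w + η·qᵢ·pᵢ and w⁽ʲ⁾ := a·w + η·qⱼ·pⱼ be the SGD updates of w. Then w⁽ⁱ⁾ ≠ 0 and w⁽ʲ⁾ ≠ 0, and if qᵢ·⟪w, pᵢ⟫ < qⱼ·⟪w, pⱼ⟫ then qᵢ·⟪w⁽ⁱ⁾/‖w⁽ⁱ⁾‖, pᵢ⟫ < qⱼ·⟪w⁽ʲ⁾/‖w⁽ʲ⁾‖, pⱼ⟫.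 In particular, for a finite nonempty family of such labeled examples, any index minimizing the current margin qᵢ·⟪w, pᵢ⟫ also minimizes the predicted future normalized margin qᵢ·⟪w⁽ⁱ⁾/‖w⁽ⁱ⁾‖, pᵢ⟫. -/
open scoped InnerProductSpace

/-!
A step `u` of fixed norm turns `x` into `x + u`. Since `‖x + u‖² = ‖x‖² + 2⟪x, u⟫ + ‖u‖²`, the
inner product `⟪x, u⟫` orders the steps in the same way as `r = ‖x + u‖` does. The same expansion
writes the normalized inner product `⟪x + u, u⟫ / r` as `(r - (‖x‖² - ‖u‖²) / r) / 2`, which is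
strictly increasing in `r` as soon as `‖u‖ ≤ ‖x‖`. An SGD update of `w` is the case `x = a • w`,
`u = (η q) • p`, where `‖u‖ = η`.
-/

theorem strictMonoOn_sub_div {𝕜 : Type*} [Field 𝕜] [LinearOrder 𝕜] [IsStrictOrderedRing 𝕜]
    {c : 𝕜} (hc : 0 ≤ c) : StrictMonoOn (fun r : 𝕜 => r - c / r) (Set.Ioi 0) := by
  intro r hr s _ hrs
  have hdiv : c / s ≤ c / r := div_le_div_of_nonneg_left hc hr hrs.le
  exact (sub_lt_sub_right hrs _).trans_le (sub_le_sub_left hdiv _)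

theorem norm_add_pos_of_norm_lt_norm {E : Type*} [SeminormedAddGroup E] {x u : E}
    (h : ‖u‖ < ‖x‖) : 0 < ‖x + u‖ :=
  (sub_pos.2 h).trans_le (norm_sub_le_norm_add x u)

section InnerProductSpace

variable {E : Type*} [SeminormedAddCommGroup E] [InnerProductSpace ℝ E]

theorem norm_add_le_norm_add_iff_inner_le_inner (x : E) {u v : E} (huv : ‖u‖ = ‖v‖) :
    ‖x + u‖ ≤ ‖x + v‖ ↔ ⟪x, u⟫_ℝ ≤ ⟪x, v⟫_ℝ := by
  rw [← sq_le_sq₀ (norm_nonneg _) (norm_nonneg _), norm_add_sq_real, norm_add_sq_real, huv]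
  simp only [add_le_add_iff_right, add_le_add_iff_left, Nat.ofNat_pos, mul_le_mul_iff_right₀]

theorem inner_inv_norm_smul_add_self (x u : E) :
    ⟪‖x + u‖⁻¹ • (x + u), u⟫_ℝ = (‖x + u‖ - (‖x‖ ^ 2 - ‖u‖ ^ 2) / ‖x + u‖) / 2 := by
  have hinner : 2 * ⟪x + u, u⟫_ℝ = ‖x + u‖ ^ 2 - (‖x‖ ^ 2 - ‖u‖ ^ 2) := by
    rw [norm_add_sq_real, inner_add_left, real_inner_self_eq_norm_sq]
    ring
  calc ⟪‖x + u‖⁻¹ • (x + u), u⟫_ℝ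
      = 2 * ⟪x + u, u⟫_ℝ / ‖x + u‖ / 2 := by rw [real_inner_smul_left]; ring
    _ = (‖x + u‖ - (‖x‖ ^ 2 - ‖u‖ ^ 2) / ‖x + u‖) / 2 := by
        rw [hinner, sub_div, sq, mul_self_div_self]

theorem inner_inv_norm_smul_add_self_le_iff {x u v : E} (hux : ‖u‖ < ‖x‖) (huv : ‖u‖ = ‖v‖) :
    ⟪‖x + u‖⁻¹ • (x + u), u⟫_ℝ ≤ ⟪‖x + v‖⁻¹ • (x + v), v⟫_ℝ ↔ ⟪x, u⟫_ℝ ≤ ⟪x, v⟫_ℝ := by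
  have hc : 0 ≤ ‖x‖ ^ 2 - ‖v‖ ^ 2 :=
    sub_nonneg.2 (pow_le_pow_left₀ (norm_nonneg v) (huv ▸ hux.le) 2)
  have hu : 0 < ‖x + u‖ := norm_add_pos_of_norm_lt_norm hux
  have hv : 0 < ‖x + v‖ := norm_add_pos_of_norm_lt_norm (huv ▸ hux)
  rw [inner_inv_norm_smul_add_self, inner_inv_norm_smul_add_self, huv,
    div_le_div_iff_of_pos_right two_pos, (strictMonoOn_sub_div hc).le_iff_le hu hv,
    norm_add_le_norm_add_iff_inner_le_inner x huv]

theorem min_margin_implies_min_future_margin_general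
    (w : E) (η lam : ℝ) (hη : 0 < η) (haw : η < (1 - η * lam) * ‖w‖)
    {ι : Type*} (p : ι → E) (q : ι → ℝ)
    (hp : ∀ i, ‖p i‖ = 1) (hq : ∀ i, q i = 1 ∨ q i = -1)
    (w' : ι → E) (hw' : ∀ i, w' i = (1 - η * lam) • w + (η * q i) • p i) :
    (∀ i, w' i ≠ 0) ∧
    ∀ i j : ι, q i * ⟪(‖w' i‖)⁻¹ • w' i, p i⟫_ℝ ≤ q j * ⟪(‖w' j‖)⁻¹ • w' j, p j⟫_ℝ ↔
      q i * ⟪w, p i⟫_ℝ ≤ q j * ⟪w, p j⟫_ℝ := by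
  have ha : 0 < 1 - η * lam := pos_of_mul_pos_left (hη.trans haw) (norm_nonneg w)
  have hstep (i : ι) : ‖(η * q i) • p i‖ = η := by
    have hqi : |q i| = 1 := (abs_eq zero_le_one).2 (hq i)
    rw [norm_smul, hp, mul_one, Real.norm_eq_abs, abs_mul, hqi, mul_one, abs_of_pos hη]
  have hlt (i : ι) : ‖(η * q i) • p i‖ < ‖(1 - η * lam) • w‖ := by
    rwa [hstep, norm_smul_of_nonneg ha.le]
  have hcurrent (i : ι) : ⟪(1 - η * lam) • w, (η * q i) • p i⟫_ℝ =
      (1 - η * lam) * η * (q i * ⟪w, p i⟫_ℝ) := by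
    rw [real_inner_smul_left, real_inner_smul_right]
    ring
  have hfuture (i : ι) : ⟪‖w' i‖⁻¹ • w' i, (η * q i) • p i⟫_ℝ =
      η * (q i * ⟪‖w' i‖⁻¹ • w' i, p i⟫_ℝ) := by
    rw [real_inner_smul_right, mul_assoc]
  constructor
  · intro i
    rw [hw']
    exact ne_zero_of_norm_ne_zero (norm_add_pos_of_norm_lt_norm (hlt i)).ne'
  · intro i j
    have hiff := inner_inv_norm_smul_add_self_le_iff (hlt i) ((hstep i).trans (hstep j).symm)
    rwa [← hw', ← hw', hfuture, hfuture, hcurrent, hcurrent, mul_le_mul_iff_right₀ hη,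
      mul_le_mul_iff_right₀ (mul_pos ha hη)] at hiff

end InnerProductSpace

/-- If `a‖w‖ > η`, then every SGD update `w⁽ⁱ⁾ = a•w + η·qᵢ•pᵢ` is nonzero,
a strictly smaller current margin yields a strictly smaller future normalized margin, and
(in particular, for a finite nonempty family) a minimizer of the current margin is a
minimizer of the future normalized margin. -/
theorem min_margin_implies_min_future_margin
    {E : Type*} [NormedAddCommGroup E] [InnerProductSpace ℝ E]
    (w : E) (hw : w ≠ 0) (η lam : ℝ) (hη : 0 < η) (hlam : 0 ≤ lam)
    (a : ℝ) (ha : a = 1 - η * lam) (ha0 : 0 < a) (haw : η < a * ‖w‖)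
    {ι : Type*} [Fintype ι] [Nonempty ι]
    (p : ι → E) (q : ι → ℝ)
    (hp : ∀ i, ‖p i‖ = 1) (hq : ∀ i, q i = 1 ∨ q i = -1)
    (w' : ι → E) (hw' : ∀ i, w' i = a • w + (η * q i) • p i) :
    (∀ i, w' i ≠ 0) ∧
    (∀ i j : ι, q i * ⟪w, p i⟫_ℝ < q j * ⟪w, p j⟫_ℝ →
      q i * ⟪(‖w' i‖)⁻¹ • w' i, p i⟫_ℝ < q j * ⟪(‖w' j‖)⁻¹ • w' j, p j⟫_ℝ) ∧
    (∀ i : ι, (∀ j, q i * ⟪w, p i⟫_ℝ ≤ q j * ⟪w, p j⟫_ℝ) →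
      ∀ j, q i * ⟪(‖w' i‖)⁻¹ • w' i, p i⟫_ℝ ≤ q j * ⟪(‖w' j‖)⁻¹ • w' j, p j⟫_ℝ) := by
  subst ha
  obtain ⟨hne, hle⟩ := min_margin_implies_min_future_margin_general w η lam hη haw p q hp hq w' hw'
  exact ⟨hne, fun i j => (lt_iff_lt_of_le_iff_le (hle j i)).2, fun i hi j => (hle i j).2 (hi j)⟩
end

section
/- Fix a real inner product space E, a weight vector w ∈ E with w ≠ 0, a learning rate η > 0 and a regularization parameter λ ≥ 0 with a := 1 − ηλ > 0. Let (pᵢ, qᵢ) and (pⱼ, qⱼ) be labeled examples with ‖pᵢ‖ = ‖pⱼ‖ = 1 and qᵢ, qⱼ ∈ {−1, 1}, and let w⁽ⁱ⁾ := a·w + η·qᵢ·pᵢ and w⁽ʲ⁾ := a·w + η·qⱼ·pⱼ. If −η/a < qᵢ·⟪w, pᵢ⟫ < qⱼ·⟪w, pⱼ⟫, then w⁽ⁱ⁾ ≠ 0, w⁽ʲ⁾ ≠ 0, and the cosine similarity between the updated and current weight vectors satisfies ⟪w⁽ⁱ⁾, w⟫/(‖w⁽ⁱ⁾‖·‖w‖)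 < ⟪w⁽ʲ⁾, w⟫/(‖w⁽ʲ⁾‖·‖w‖). In particular, the example of minimum current margin (among examples whose margin exceeds −η/a) induces the SGD update of maximal angular model change from w. -/
open scoped InnerProductSpace

/-!
Put `x = a • w` and `y = η • q • p`. The updated vector `x + y` lies on the sphere of radius
`r = ‖y‖` about `x`, and by the law of cosines the cosine of its angle with `x` is
`(s + (‖x‖ ^ 2 - r ^ 2) / s) / (2 * ‖x‖)` with `s = ‖x + y‖`. This increases with `s` once
`‖x‖ ^ 2 - r ^ 2 ≤ s ^ 2`, that is, once `-r ^ 2 ≤ ⟪x, y⟫`, which is what the lower bound on the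
margins provides; and `s` increases with `⟪x, y⟫`, that is, with the margin.
-/

theorem strictMonoOn_add_div (c : ℝ) :
    StrictMonoOn (fun t : ℝ ↦ t + c / t) {t | 0 < t ∧ c ≤ t ^ 2} := by
  rintro s ⟨hs, hcs⟩ t ⟨ht, -⟩ hst
  have hc : c < s * t := hcs.trans_lt (by rw [sq]; gcongr)
  have hdiff : t + c / t - (s + c / s) = (t - s) * (s * t - c) / (s * t) := by
    field_simp
    ring
  have hpos : 0 < (t - s) * (s * t - c) / (s * t) :=
    div_pos (mul_pos (sub_pos.2 hst) (sub_pos.2 hc)) (mul_pos hs ht)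
  exact sub_pos.1 (hdiff ▸ hpos)

section InnerProductSpace

open InnerProductGeometry

variable {E : Type*} [NormedAddCommGroup E] [InnerProductSpace ℝ E] {x y z : E}

theorem norm_smul_of_eq_one_or_neg_one {q : ℝ} (hq : q = 1 ∨ q = -1) (x : E) :
    ‖q • x‖ = ‖x‖ := by
  rcases hq with rfl | rfl <;> simp

theorem add_ne_zero_of_neg_norm_sq_lt_inner (h : -‖y‖ ^ 2 < ⟪x, y⟫_ℝ) : x + y ≠ 0 := by
  intro hxy
  rw [eq_neg_of_add_eq_zero_left hxy, inner_neg_left, real_inner_self_eq_norm_sq] at h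
  exact h.false

theorem cos_angle_add_self_eq (x y : E) :
    Real.cos (angle (x + y) x) =
      (‖x + y‖ + (‖x‖ ^ 2 - ‖y‖ ^ 2) / ‖x + y‖) / (2 * ‖x‖) := by
  have hinner : ⟪x + y, x⟫_ℝ = (‖x + y‖ * ‖x + y‖ + (‖x‖ ^ 2 - ‖y‖ ^ 2)) / 2 := by
    rw [← sq, norm_add_sq_real, inner_add_left, real_inner_self_eq_norm_sq, real_inner_comm]
    ring
  calc Real.cos (angle (x + y) x)
    _ = (‖x + y‖ * ‖x + y‖ / ‖x + y‖ + (‖x‖ ^ 2 - ‖y‖ ^ 2) / ‖x + y‖) / (2 * ‖x‖) := by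
      rw [cos_angle, hinner]
      ring
    _ = _ := by rw [mul_self_div_self]

theorem norm_add_lt_norm_add_of_inner_lt (hyz : ‖y‖ = ‖z‖) (h : ⟪x, y⟫_ℝ < ⟪x, z⟫_ℝ) :
    ‖x + y‖ < ‖x + z‖ := by
  refine lt_of_pow_lt_pow_left₀ 2 (norm_nonneg _) ?_
  rw [norm_add_sq_real, norm_add_sq_real, hyz]
  linarith

theorem cos_angle_add_self_lt_of_inner_lt (hyz : ‖y‖ = ‖z‖) (hy : -‖y‖ ^ 2 < ⟪x, y⟫_ℝ)
    (h : ⟪x, y⟫_ℝ < ⟪x, z⟫_ℝ) :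
    Real.cos (angle (x + y) x) < Real.cos (angle (x + z) x) := by
  have hx : x ≠ 0 := by
    rintro rfl
    simp at h
  have hlt : ‖x + y‖ < ‖x + z‖ := norm_add_lt_norm_add_of_inner_lt hyz h
  have hpos : 0 < ‖x + y‖ := norm_pos_iff.2 (add_ne_zero_of_neg_norm_sq_lt_inner hy)
  have hle : ‖x‖ ^ 2 - ‖y‖ ^ 2 ≤ ‖x + y‖ ^ 2 := by
    rw [norm_add_sq_real]
    linarith
  rw [cos_angle_add_self_eq, cos_angle_add_self_eq, ← hyz]
  gcongr ?_ / _
  exact strictMonoOn_add_div _ ⟨hpos, hle⟩ ⟨hpos.trans hlt, hle.trans (by gcongr)⟩ hlt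

/-- `u` and `v` stand for the signed examples `qi • pi` and `qj • pj`. -/
theorem min_margin_implies_max_model_change_general {w u v : E} {a η : ℝ} (ha : 0 < a)
    (hη : 0 < η) (huv : ‖u‖ = ‖v‖) (hu : -η * ‖u‖ ^ 2 / a < ⟪w, u⟫_ℝ)
    (h : ⟪w, u⟫_ℝ < ⟪w, v⟫_ℝ) :
    a • w + η • u ≠ 0 ∧ a • w + η • v ≠ 0 ∧
      ⟪a • w + η • u, w⟫_ℝ / (‖a • w + η • u‖ * ‖w‖) <
        ⟪a • w + η • v, w⟫_ℝ / (‖a • w + η • v‖ * ‖w‖) := by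
  have hinner (t : E) : ⟪a • w, η • t⟫_ℝ = η * (a * ⟪w, t⟫_ℝ) := by
    rw [real_inner_smul_right, real_inner_smul_left]
  have hnorm : ‖η • u‖ = ‖η • v‖ := by rw [norm_smul, norm_smul, huv]
  have hlt : ⟪a • w, η • u⟫_ℝ < ⟪a • w, η • v⟫_ℝ := by
    rw [hinner, hinner]
    gcongr
  have hlo : -‖η • u‖ ^ 2 < ⟪a • w, η • u⟫_ℝ := by
    rw [div_lt_iff₀' ha] at hu
    calc -‖η • u‖ ^ 2 = η * (-η * ‖u‖ ^ 2) := by rw [norm_smul_of_nonneg hη.le]; ring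
      _ < η * (a * ⟪w, u⟫_ℝ) := by gcongr
      _ = ⟪a • w, η • u⟫_ℝ := (hinner u).symm
  refine ⟨add_ne_zero_of_neg_norm_sq_lt_inner hlo,
    add_ne_zero_of_neg_norm_sq_lt_inner (hnorm ▸ hlo.trans hlt), ?_⟩
  rw [← cos_angle, ← cos_angle, ← angle_smul_right_of_pos _ w ha,
    ← angle_smul_right_of_pos (a • w + η • v) w ha]
  exact cos_angle_add_self_lt_of_inner_lt hnorm hlo hlt

end InnerProductSpace

/-- Among examples whose current margin exceeds `-η/a`, a strictly smaller
current margin induces an SGD update with strictly smaller cosine similarity to the current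
weight vector, i.e. a larger angular model change; moreover both updates are nonzero. -/
theorem min_margin_implies_max_model_change
    {E : Type*} [NormedAddCommGroup E] [InnerProductSpace ℝ E]
    (w : E) (hw : w ≠ 0) (η lam : ℝ) (hη : 0 < η) (hlam : 0 ≤ lam)
    (a : ℝ) (ha : a = 1 - η * lam) (ha0 : 0 < a)
    (pi pj : E) (qi qj : ℝ)
    (hpi : ‖pi‖ = 1) (hpj : ‖pj‖ = 1)
    (hqi : qi = 1 ∨ qi = -1) (hqj : qj = 1 ∨ qj = -1)
    (wi wj : E)
    (hwi : wi = a • w + (η * qi) • pi) (hwj : wj = a • w + (η * qj) • pj)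
    (hlo : -η / a < qi * ⟪w, pi⟫_ℝ)
    (hij : qi * ⟪w, pi⟫_ℝ < qj * ⟪w, pj⟫_ℝ) :
    wi ≠ 0 ∧ wj ≠ 0 ∧
    ⟪wi, w⟫_ℝ / (‖wi‖ * ‖w‖) < ⟪wj, w⟫_ℝ / (‖wj‖ * ‖w‖) := by
  have hi : ‖qi • pi‖ = 1 := (norm_smul_of_eq_one_or_neg_one hqi pi).trans hpi
  have hj : ‖qj • pj‖ = 1 := (norm_smul_of_eq_one_or_neg_one hqj pj).trans hpj
  simp only [← real_inner_smul_right] at hlo hij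
  rw [hwi, hwj, mul_smul, mul_smul]
  exact min_margin_implies_max_model_change_general ha0 hη (hi.trans hj.symm)
    (by simpa [hi] using hlo) hij
end

section
/- Fix a real inner product space E, natural numbers m ≥ 1 and t ≥ 2, a learning rate η := 1/(m·t), and a regularization parameter λ with 0 ≤ λ ≤ m·t; set a := 1 − ηλ (so 0 ≤ a ≤ 1). Let (p_k, q_k)_{k<m} and (p*_k, q*_k)_{k<m} be two sequences of labeled examples in E with ‖p_k‖ ≤ 1, ‖p*_k‖ ≤ 1, q_k, q*_k ∈ {−1, 1}, and suppose there exist real numbers θ ∈ [0, 1] and δ ≥ 0 such that ‖p_k − p*_k‖ ≤ δ for all k and q_k = q*_k for at least θ·m of the indices k < m. Define two SGD runs from the same initial vector w_t ∈ E by w_{k+1} = a·w_k + η·q_k·p_k and w*_{k+1} = a·w*_k + η·q*_k·p*_k with w_0 = w*_0 = w_t, and write w_{t+1} := w_m, w*_{t+1} := w*_m. Then ‖w_{t+1} − w*_{t+1}‖ ≤ ln(1 + 1/(t−1))·(2·(1 − θ) + δ). -/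
/-!
Writing `q • p - q* • p* = q • (p - p*) + (q - q*) • p*` separates feature errors, worth at most `δ`
per step, from label errors, worth at most `2` at each of the at most `(1 - θ) m` steps where the
labels disagree. Since `|a| ≤ 1`, the deviation between the two runs grows per step by no more than
`η` times that step's error, so it ends up at most `η m (2 (1 - θ) + δ)`, and
`η m = 1 / t = 1 - x⁻¹ ≤ log x` for `x = 1 + 1 / (t - 1)`.
-/

theorem sum_norm_sub_le_mul_card_sub_card_eq {ι F : Type*} [SeminormedAddCommGroup F]
    [DecidableEq F] {s : Finset ι} {f g : ι → F} {C : ℝ} (h : ∀ i ∈ s, ‖f i - g i‖ ≤ C) :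
    ∑ i ∈ s, ‖f i - g i‖ ≤ C * (s.card - (s.filter fun i => f i = g i).card) := by
  have card_ne : ((s.filter fun i => f i ≠ g i).card : ℝ)
      = s.card - (s.filter fun i => f i = g i).card :=
    eq_sub_of_add_eq' (mod_cast s.card_filter_add_card_filter_not fun i => f i = g i)
  calc ∑ i ∈ s, ‖f i - g i‖ = ∑ i ∈ s with f i ≠ g i, ‖f i - g i‖ := by
        refine (Finset.sum_filter_of_ne ?_).symm
        rintro i - norm_ne_zero h_eq
        exact norm_ne_zero (by rw [h_eq, sub_self, norm_zero])
    _ ≤ (s.filter fun i => f i ≠ g i).card • C :=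
        Finset.sum_le_card_nsmul _ _ _ fun i hi => h i (Finset.mem_filter.1 hi).1
    _ = C * (s.card - (s.filter fun i => f i = g i).card) := by
        rw [nsmul_eq_mul, card_ne, mul_comm]

section Module

variable {R E : Type*} [SeminormedRing R] [SeminormedAddCommGroup E] [Module R E]
  [IsBoundedSMul R E]

theorem norm_le_norm_zero_add_sum_of_affine_recurrence {n : ℕ} {a : ℕ → R} {u d : ℕ → E}
    (ha : ∀ k < n, ‖a k‖ ≤ 1) (hu : ∀ k < n, u (k + 1) = a k • u k + d k) :
    ‖u n‖ ≤ ‖u 0‖ + ∑ k ∈ Finset.range n, ‖d k‖ := by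
  have increment_le : ∀ k ∈ Finset.range n, ‖u (k + 1)‖ - ‖u k‖ ≤ ‖d k‖ := by
    intro k hk
    rw [Finset.mem_range] at hk
    rw [sub_le_iff_le_add']
    calc ‖u (k + 1)‖ ≤ ‖a k • u k‖ + ‖d k‖ := hu k hk ▸ norm_add_le _ _
      _ ≤ ‖u k‖ + ‖d k‖ := by
        gcongr
        exact (norm_smul_le _ _).trans (mul_le_of_le_one_left (norm_nonneg _) (ha k hk))
  rw [← sub_le_iff_le_add', ← Finset.sum_range_sub fun k => ‖u k‖]
  exact Finset.sum_le_sum increment_le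

theorem norm_smul_sub_smul_le (r s : R) (x y : E) :
    ‖r • x - s • y‖ ≤ ‖r‖ * ‖x - y‖ + ‖r - s‖ * ‖y‖ :=
  calc ‖r • x - s • y‖ = ‖r • (x - y) + (r - s) • y‖ := by
        rw [smul_sub, sub_smul, sub_add_sub_cancel]
    _ ≤ ‖r‖ * ‖x - y‖ + ‖r - s‖ * ‖y‖ := norm_add_le_of_le (norm_smul_le _ _) (norm_smul_le _ _)

theorem sum_norm_smul_sub_smul_le {ι : Type*} [DecidableEq R] {s : Finset ι}
    {p ps : ι → E} {q qs : ι → R} {θ δ : ℝ} (hps : ∀ k ∈ s, ‖ps k‖ ≤ 1)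
    (hq : ∀ k ∈ s, ‖q k‖ ≤ 1) (hqs : ∀ k ∈ s, ‖qs k‖ ≤ 1)
    (hdiff : ∀ k ∈ s, ‖p k - ps k‖ ≤ δ)
    (hagree : θ * s.card ≤ (s.filter fun k => q k = qs k).card) :
    ∑ k ∈ s, ‖q k • p k - qs k • ps k‖ ≤ s.card * (2 * (1 - θ) + δ) := by
  have error_le : ∀ k ∈ s, ‖q k • p k - qs k • ps k‖ ≤ δ + ‖q k - qs k‖ := fun k hk =>
    (norm_smul_sub_smul_le _ _ _ _).trans <| add_le_add
      ((mul_le_of_le_one_left (norm_nonneg _) (hq k hk)).trans (hdiff k hk))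
      (mul_le_of_le_one_right (norm_nonneg _) (hps k hk))
  have label_error_le : ∀ k ∈ s, ‖q k - qs k‖ ≤ 2 := fun k hk =>
    (norm_sub_le_of_le (hq k hk) (hqs k hk)).trans_eq one_add_one_eq_two
  calc ∑ k ∈ s, ‖q k • p k - qs k • ps k‖
      ≤ ∑ k ∈ s, (δ + ‖q k - qs k‖) := Finset.sum_le_sum error_le
    _ = s.card * δ + ∑ k ∈ s, ‖q k - qs k‖ := by
        rw [Finset.sum_add_distrib, Finset.sum_const, nsmul_eq_mul]
    _ ≤ s.card * δ + 2 * (s.card - (s.filter fun k => q k = qs k).card) := by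
        gcongr
        exact sum_norm_sub_le_mul_card_sub_card_eq label_error_le
    _ ≤ s.card * (2 * (1 - θ) + δ) := by linarith

theorem norm_sgd_sub_le_mul_sum {m : ℕ} {η a : R} {p ps : ℕ → E} {q qs : ℕ → R}
    {w ws : ℕ → E} (ha : ‖a‖ ≤ 1) (h0 : w 0 = ws 0)
    (hw : ∀ k < m, w (k + 1) = a • w k + (η * q k) • p k)
    (hws : ∀ k < m, ws (k + 1) = a • ws k + (η * qs k) • ps k) :
    ‖w m - ws m‖ ≤ ‖η‖ * ∑ k ∈ Finset.range m, ‖q k • p k - qs k • ps k‖ := by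
  have recurrence : ∀ k < m, w (k + 1) - ws (k + 1)
      = a • (w k - ws k) + η • (q k • p k - qs k • ps k) := by
    intro k hk
    rw [hw k hk, hws k hk, mul_smul, mul_smul, add_sub_add_comm, smul_sub, smul_sub]
  calc ‖w m - ws m‖
      ≤ ‖w 0 - ws 0‖ + ∑ k ∈ Finset.range m, ‖η • (q k • p k - qs k • ps k)‖ :=
        norm_le_norm_zero_add_sum_of_affine_recurrence (u := fun k => w k - ws k)
          (fun _ _ => ha) recurrence
    _ = ∑ k ∈ Finset.range m, ‖η • (q k • p k - qs k • ps k)‖ := by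
        rw [h0, sub_self, norm_zero, zero_add]
    _ ≤ ‖η‖ * ∑ k ∈ Finset.range m, ‖q k • p k - qs k • ps k‖ := by
        rw [Finset.mul_sum]
        exact Finset.sum_le_sum fun _ _ => norm_smul_le _ _

end Module

theorem one_div_le_log_one_add_one_div_sub_one {t : ℝ} (ht : 1 < t) :
    1 / t ≤ Real.log (1 + 1 / (t - 1)) := by
  have ht_sub : 0 < t - 1 := sub_pos.2 ht
  calc 1 / t = 1 - (1 + 1 / (t - 1))⁻¹ := by
        field_simp
        ring
    _ ≤ Real.log (1 + 1 / (t - 1)) := Real.one_sub_inv_le_log_of_pos (by positivity)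

theorem predicted_model_deviation_bound_general
    {E : Type*} [SeminormedAddCommGroup E] [NormedSpace ℝ E]
    {m : ℕ} {t : ℝ} (hm : 1 ≤ m) (ht : 1 < t)
    {η : ℝ} (hη : η = 1 / (m * t))
    {lam : ℝ} (hlam0 : 0 ≤ lam) (hlam1 : lam ≤ 2 * (m * t))
    {a : ℝ} (ha : a = 1 - η * lam)
    {p ps : ℕ → E} {q qs : ℕ → ℝ} (hps : ∀ k < m, ‖ps k‖ ≤ 1)
    (hq : ∀ k < m, |q k| ≤ 1) (hqs : ∀ k < m, |qs k| ≤ 1)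
    {θ δ : ℝ} (hdiff : ∀ k < m, ‖p k - ps k‖ ≤ δ)
    (hagree : θ * m ≤ ((Finset.range m).filter (fun k => q k = qs k)).card)
    {w ws : ℕ → E} (h0 : w 0 = ws 0)
    (hw : ∀ k < m, w (k + 1) = a • w k + (η * q k) • p k)
    (hws : ∀ k < m, ws (k + 1) = a • ws k + (η * qs k) • ps k) :
    ‖w m - ws m‖ ≤ Real.log (1 + 1 / (t - 1)) * (2 * (1 - θ) + δ) := by
  have hm_pos : (0 : ℝ) < m := mod_cast hm
  have ht_pos : 0 < t := one_pos.trans ht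
  have hη_nonneg : 0 ≤ η := by rw [hη]; positivity
  have ha_abs : |a| ≤ 1 := by
    have hηlam : η * lam ≤ 2 := by
      rwa [hη, one_div_mul_eq_div, div_le_iff₀ (mul_pos hm_pos ht_pos)]
    rw [ha, abs_le]
    constructor <;> linarith [mul_nonneg hη_nonneg hlam0]
  have sum_le : ∑ k ∈ Finset.range m, ‖q k • p k - qs k • ps k‖ ≤ m * (2 * (1 - θ) + δ) := by
    simpa only [Finset.card_range] using sum_norm_smul_sub_smul_le (s := Finset.range m)
      (by simpa using hps) (by simpa using hq) (by simpa using hqs) (by simpa using hdiff)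
      (by simpa using hagree)
  have factor_nonneg : 0 ≤ 2 * (1 - θ) + δ :=
    nonneg_of_mul_nonneg_right
      ((Finset.sum_nonneg fun _ _ => norm_nonneg _).trans sum_le) hm_pos
  calc ‖w m - ws m‖ ≤ ‖η‖ * ∑ k ∈ Finset.range m, ‖q k • p k - qs k • ps k‖ :=
        norm_sgd_sub_le_mul_sum ha_abs h0 hw hws
    _ = η * ∑ k ∈ Finset.range m, ‖q k • p k - qs k • ps k‖ := by
        rw [Real.norm_of_nonneg hη_nonneg]
    _ ≤ η * (m * (2 * (1 - θ) + δ)) := by gcongr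
    _ = 1 / t * (2 * (1 - θ) + δ) := by
        rw [hη]
        field_simp
    _ ≤ Real.log (1 + 1 / (t - 1)) * (2 * (1 - θ) + δ) := by
        gcongr
        exact one_div_le_log_one_add_one_div_sub_one ht

/-- Theorem 2 of the paper, fully hypothesized. With learning rate
`η = 1/(mt)`, `0 ≤ λ ≤ mt`, `a = 1 − ηλ`, true and predicted labeled examples with
feature discrepancy at most `δ` and label agreement on at least `θ·m` of the `m` steps,
the models obtained by `m` SGD updates from the same initial vector satisfy
`‖w_{t+1} − w*_{t+1}‖ ≤ ln(1 + 1/(t−1))·(2(1−θ) + δ)`. -/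
theorem predicted_model_deviation_bound
    {E : Type*} [NormedAddCommGroup E] [InnerProductSpace ℝ E]
    (m t : ℕ) (hm : 1 ≤ m) (ht : 2 ≤ t)
    (η : ℝ) (hη : η = 1 / ((m : ℝ) * t))
    (lam : ℝ) (hlam0 : 0 ≤ lam) (hlam1 : lam ≤ (m : ℝ) * t)
    (a : ℝ) (ha : a = 1 - η * lam)
    (p ps : ℕ → E) (q qs : ℕ → ℝ)
    (hp : ∀ k < m, ‖p k‖ ≤ 1) (hps : ∀ k < m, ‖ps k‖ ≤ 1)
    (hq : ∀ k < m, q k = 1 ∨ q k = -1) (hqs : ∀ k < m, qs k = 1 ∨ qs k = -1)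
    (θ δ : ℝ) (hθ : θ ∈ Set.Icc (0 : ℝ) 1) (hδ : 0 ≤ δ)
    (hdiff : ∀ k < m, ‖p k - ps k‖ ≤ δ)
    (hagree : θ * m ≤ ((Finset.range m).filter (fun k => q k = qs k)).card)
    (wt : E) (w ws : ℕ → E) (h0 : w 0 = wt) (h0s : ws 0 = wt)
    (hw : ∀ k < m, w (k + 1) = a • w k + (η * q k) • p k)
    (hws : ∀ k < m, ws (k + 1) = a • ws k + (η * qs k) • ps k) :
    ‖w m - ws m‖ ≤ Real.log (1 + 1 / ((t : ℝ) - 1)) * (2 * (1 - θ) + δ) :=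
  predicted_model_deviation_bound_general hm (Nat.one_lt_cast.2 ht) hη hlam0 (by linarith) ha hps
    (fun k hk => ((abs_eq zero_le_one).2 (hq k hk)).le)
    (fun k hk => ((abs_eq zero_le_one).2 (hqs k hk)).le)
    hdiff hagree (h0.trans h0s.symm) hw hws
end
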